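/- Let M : ℝ → ℝ be continuous, let L > 0 and k > 0 (k plays the role of the flexural stiffness EJ), and set H(x) = ∫ₓ^L M(ξ) dξ. Assume |H(x)| < k for all x ∈ [0, L]. Define y(x) = −∫ₓ^L H(ξ)/√(k² − H(ξ)²) dξ. Then y(L) = 0, y is differentiable on [0, L] with y′(x) = H(x)/√(k² − H(x)²), in particular y′(L) = 0, and for every x ∈ [0, L] one has y′(x)/√(1 + y′(x)²) = H(x)/k; consequently (d/dx)(y′(x)/√(1 + y′(x)²)) = −M(x)/k on [0, L], i.e. y solves the exact (nonlinear curvature) rod deflection problem. -/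

import Mathlib

/-!
Let `θ` be the inclination of the rod, so that `y' = tan θ` and `y' / √(1 + y'²) = sin θ`. The
equation then reads `(sin θ)' = -M / k` with `θ(L) = 0`, that is `sin θ = H / k`. Since `|H| < k`,
it is solved by `θ = arcsin (H / k)`, whose tangent is `H / √(k² - H²)`; integrating this slope from
the clamped end gives `y`.
-/

open Set

theorem hasDerivWithinAt_integral_left_Icc {E : Type*} [NormedAddCommGroup E] [NormedSpace ℝ E]
    [CompleteSpace E] {f : ℝ → E} {a b x : ℝ} (hf : ContinuousOn f (Icc a b)) (hx : x ∈ Icc a b) :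
    HasDerivWithinAt (fun u ↦ ∫ t in u..b, f t) (-f x) (Icc a b) x :=
  have hint : IntervalIntegrable f MeasureTheory.volume x b :=
    (hf.mono (Icc_subset_Icc_left hx.1)).intervalIntegrable_of_Icc hx.2
  haveI : Fact (x ∈ Icc a b) := ⟨hx⟩
  intervalIntegral.integral_hasDerivWithinAt_left hint
    (hf.stronglyMeasurableAtFilter_nhdsWithin measurableSet_Icc x) (hf x hx)

section TangentOfArcsin

variable {h k : ℝ}

theorem sq_sub_sq_pos_of_abs_lt (hhk : |h| < k) : 0 < k ^ 2 - h ^ 2 :=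
  sub_pos.2 (sq_lt_sq.2 (hhk.trans_le (le_abs_self k)))

theorem tan_arcsin_div (hk : 0 < k) : Real.tan (Real.arcsin (h / k)) = h / √(k ^ 2 - h ^ 2) := by
  have radicand : k ^ 2 - h ^ 2 = k ^ 2 * (1 - (h / k) ^ 2) := by field_simp
  rw [Real.tan_arcsin, radicand, Real.sqrt_mul (sq_nonneg k), Real.sqrt_sq hk.le, div_div]

theorem arctan_div_sqrt_sq_sub_sq (hhk : |h| < k) :
    Real.arctan (h / √(k ^ 2 - h ^ 2)) = Real.arcsin (h / k) := by
  have hk : 0 < k := (abs_nonneg h).trans_lt hhk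
  obtain ⟨hneg, hlt⟩ := abs_lt.1 hhk
  rw [← tan_arcsin_div hk]
  refine Real.arctan_tan (Real.neg_pi_div_two_lt_arcsin.2 ?_) (Real.arcsin_lt_pi_div_two.2 ?_)
  · rwa [lt_div_iff₀ hk, neg_one_mul]
  · rwa [div_lt_one hk]

theorem div_sqrt_one_add_sq_of_div_sqrt_sq_sub_sq (hhk : |h| < k) :
    (h / √(k ^ 2 - h ^ 2)) / √(1 + (h / √(k ^ 2 - h ^ 2)) ^ 2) = h / k := by
  have hk : 0 < k := (abs_nonneg h).trans_lt hhk
  have hle : |h / k| ≤ 1 := by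
    rw [abs_div, abs_of_pos hk]
    exact ((div_lt_one hk).2 hhk).le
  rw [← Real.sin_arctan, arctan_div_sqrt_sq_sub_sq hhk,
    Real.sin_arcsin (neg_le_of_abs_le hle) (le_of_abs_le hle)]

theorem continuousOn_div_sqrt_sq_sub_sq {X : Type*} [TopologicalSpace X] {H : X → ℝ} {s : Set X}
    (hH : ContinuousOn H s) (hbound : ∀ x ∈ s, |H x| < k) :
    ContinuousOn (fun x ↦ H x / √(k ^ 2 - H x ^ 2)) s :=
  hH.div (continuousOn_const.sub (hH.pow 2)).sqrt fun x hx ↦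
    (Real.sqrt_pos.2 (sq_sub_sq_pos_of_abs_lt (hbound x hx))).ne'

end TangentOfArcsin

theorem rod_exact_deflection_solution_general {M H y : ℝ → ℝ} {a b k : ℝ} (hab : a ≤ b)
    (hM : ContinuousOn M (Icc a b))
    (hH : ∀ x ∈ Icc a b, H x = ∫ ξ in x..b, M ξ)
    (hbound : ∀ x ∈ Icc a b, |H x| < k)
    (hy : ∀ x ∈ Icc a b, y x = -(∫ ξ in x..b, H ξ / √(k ^ 2 - H ξ ^ 2))) :
    y b = 0 ∧
    (∀ x ∈ Icc a b, HasDerivWithinAt y (H x / √(k ^ 2 - H x ^ 2)) (Icc a b) x) ∧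
    HasDerivWithinAt y 0 (Icc a b) b ∧
    (∀ x ∈ Icc a b,
      (H x / √(k ^ 2 - H x ^ 2)) / √(1 + (H x / √(k ^ 2 - H x ^ 2)) ^ 2) = H x / k) ∧
    (∀ x ∈ Icc a b,
      HasDerivWithinAt
        (fun t ↦ (H t / √(k ^ 2 - H t ^ 2)) / √(1 + (H t / √(k ^ 2 - H t ^ 2)) ^ 2))
        (-(M x) / k) (Icc a b) x) := by
  have hb : b ∈ Icc a b := right_mem_Icc.2 hab
  have hHb : H b = 0 := (hH b hb).trans intervalIntegral.integral_same
  have deriv_H : ∀ x ∈ Icc a b, HasDerivWithinAt H (-(M x)) (Icc a b) x := fun x hx ↦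
    (hasDerivWithinAt_integral_left_Icc hM hx).congr hH (hH x hx)
  have slope_continuousOn : ContinuousOn (fun x ↦ H x / √(k ^ 2 - H x ^ 2)) (Icc a b) :=
    continuousOn_div_sqrt_sq_sub_sq (fun x hx ↦ (deriv_H x hx).continuousWithinAt) hbound
  have deriv_y : ∀ x ∈ Icc a b,
      HasDerivWithinAt y (H x / √(k ^ 2 - H x ^ 2)) (Icc a b) x := fun x hx ↦ by
    simpa only [neg_neg] using
      (hasDerivWithinAt_integral_left_Icc slope_continuousOn hx).fun_neg.congr hy (hy x hx)
  have sin_inclination : ∀ x ∈ Icc a b,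
      (H x / √(k ^ 2 - H x ^ 2)) / √(1 + (H x / √(k ^ 2 - H x ^ 2)) ^ 2) = H x / k :=
    fun x hx ↦ div_sqrt_one_add_sq_of_div_sqrt_sq_sub_sq (hbound x hx)
  refine ⟨?_, deriv_y, ?_, sin_inclination, fun x hx ↦ ?_⟩
  · rw [hy b hb, intervalIntegral.integral_same, neg_zero]
  · simpa only [hHb, zero_div] using deriv_y b hb
  · exact ((deriv_H x hx).div_const k).congr sin_inclination (sin_inclination x hx)

/-- The exact (nonlinear curvature) rod deflection problem:
`y(x) = -∫ₓ^L H(ξ)/√(k² - H(ξ)²) dξ` with `H(x) = ∫ₓ^L M(ξ) dξ` solves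
`(d/dx)(y'/√(1+y'²)) = -M(x)/k` on `[0, L]` with `y(L) = 0`, `y'(L) = 0`. -/
theorem rod_exact_deflection_solution
    (M H y : ℝ → ℝ) (L k : ℝ) (hL : 0 < L) (hk : 0 < k)
    (hM : Continuous M)
    (hH : ∀ x, H x = ∫ ξ in x..L, M ξ)
    (hbound : ∀ x ∈ Set.Icc (0:ℝ) L, |H x| < k)
    (hy : ∀ x, y x = -(∫ ξ in x..L, H ξ / Real.sqrt (k ^ 2 - (H ξ) ^ 2))) :
    y L = 0 ∧
    (∀ x ∈ Set.Icc (0:ℝ) L,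
      HasDerivWithinAt y (H x / Real.sqrt (k ^ 2 - (H x) ^ 2)) (Set.Icc 0 L) x) ∧
    HasDerivWithinAt y 0 (Set.Icc 0 L) L ∧
    (∀ x ∈ Set.Icc (0:ℝ) L,
      (H x / Real.sqrt (k ^ 2 - (H x) ^ 2)) /
        Real.sqrt (1 + (H x / Real.sqrt (k ^ 2 - (H x) ^ 2)) ^ 2) = H x / k) ∧
    (∀ x ∈ Set.Icc (0:ℝ) L,
      HasDerivWithinAt
        (fun t => (H t / Real.sqrt (k ^ 2 - (H t) ^ 2)) /
          Real.sqrt (1 + (H t / Real.sqrt (k ^ 2 - (H t) ^ 2)) ^ 2))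
        (-(M x) / k) (Set.Icc 0 L) x) :=
  rod_exact_deflection_solution_general hL.le hM.continuousOn (fun x _ ↦ hH x) hbound
    (fun x _ ↦ hy x)
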